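/- arXiv:2204.00995 — 5 statements merged into one kernel-verified Lean document; each statement's English description precedes it below -/
import Mathlib

section
/- Let c : Fin n → Fin s be an equitable partition of a matrix-weighted signed graph with weight matrices 𝒜, block Laplacian L, and characteristic matrix P_π. Define the quotient Laplacian L_π ∈ ℝ^{(s·d)×(s·d)} blockwise by: for i, j ∈ Fin s and any representative r with c r = i, (L_π)_{ij} = −Σ_{t : c t = j} 𝒜 r t when i ≠ j, and (L_π)_{ii} = (Σ_t |𝒜 r t|) − Σ_{t : c t = i} 𝒜 r t (these blocks are independent of the choice of representative r by equitability). Then L · P_π = P_π · L_π, and consequently the column space of P_π (the range of the linear map x ↦ P_π.mulVec x) is invariant under the linear map x ↦ L.mulVec x. -/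
open Matrix

/-- Characteristic matrix of a partition `c : Fin n → Fin s`, with `d × d` identity
blocks at positions `(i, c i)` and zero blocks elsewhere. -/
noncomputable def charM (n s d : ℕ) (c : Fin n → Fin s) :
    Matrix (Fin n × Fin d) (Fin s × Fin d) ℝ :=
  fun ia jb => if c ia.1 = jb.1 ∧ ia.2 = jb.2 then 1 else 0

/-! A matrix-weighted graph is a graph with weights in the noncommutative ring of `d × d` matrices,
so the commutation can be proved for weights in an arbitrary ring and then flattened blockwise.
Over a ring, equitability of `A` says exactly that `A * P = P * Aπ`, and the row sums of the
unsigned weights `B` are constant on cells, with common values the row sums of `Bπ`. Hence both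
terms of the Laplacian `diagonal (row sums of B) - A` commute with `P`, and the quotient Laplacian
is the Laplacian of the quotient weights. -/

section Quotient

variable {V C S : Type*} [DecidableEq C]

/-- The characteristic matrix of the partition of `V` into the fibres of `c`, with entries in `S`;
row `v` is the unit vector at the cell `c v`. -/
def partitionMatrix (S : Type*) [Zero S] [One S] (c : V → C) : Matrix V C S :=
  (1 : Matrix C C S).submatrix c id

theorem partitionMatrix_apply [Zero S] [One S] (c : V → C) (v : V) (j : C) :
    partitionMatrix S c v j = if c v = j then 1 else 0 :=
  Matrix.one_apply

theorem partitionMatrix_mul [Fintype C] [NonAssocSemiring S] {κ : Type*} (c : V → C)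
    (N : Matrix C κ S) : partitionMatrix S c * N = N.submatrix c id :=
  Matrix.one_submatrix_mul c (Equiv.refl C) N

variable [Fintype V]

theorem mul_partitionMatrix_apply [NonAssocSemiring S] {κ : Type*} (c : V → C) (M : Matrix κ V S)
    (i : κ) (j : C) : (M * partitionMatrix S c) i j = ∑ t with c t = j, M i t := by
  simp only [Matrix.mul_apply, partitionMatrix_apply, mul_ite, mul_one, mul_zero,
    Finset.sum_filter]

/-- The partition of `V` into the fibres of `c` is equitable for the weights `A`: the total weight
from a vertex into a cell depends only on the cell of the vertex. For a signed graph this is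
required of the signed and of the unsigned weights. -/
def IsEquitable [AddCommMonoid S] (c : V → C) (A : Matrix V V S) : Prop :=
  ∀ r r', c r = c r' → ∀ j, ∑ t with c t = j, A r t = ∑ t with c t = j, A r' t

/-- The weights of the quotient graph: the total weight from the representative `rep i` of the
cell `i` into the cell `j`. -/
def quotientMatrix [AddCommMonoid S] (c : V → C) (rep : C → V) (A : Matrix V V S) :
    Matrix C C S :=
  Matrix.of fun i j => ∑ t with c t = j, A (rep i) t

theorem sum_quotientMatrix [Fintype C] [AddCommMonoid S] (c : V → C) (rep : C → V)
    (A : Matrix V V S) (i : C) : ∑ j, quotientMatrix c rep A i j = ∑ t, A (rep i) t :=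
  Finset.sum_fiberwise Finset.univ c (A (rep i))

section Equitable

variable {c : V → C} {rep : C → V}

theorem IsEquitable.quotientMatrix_apply [AddCommMonoid S] {A : Matrix V V S}
    (hA : IsEquitable c A) (hrep : Function.RightInverse rep c) (v : V) (j : C) :
    quotientMatrix c rep A (c v) j = ∑ t with c t = j, A v t :=
  hA _ _ (hrep (c v)) j

theorem IsEquitable.sum_quotientMatrix [Fintype C] [AddCommMonoid S] {A : Matrix V V S}
    (hA : IsEquitable c A) (hrep : Function.RightInverse rep c) (v : V) :
    ∑ j, quotientMatrix c rep A (c v) j = ∑ t, A v t := by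
  simp only [hA.quotientMatrix_apply hrep, Finset.sum_fiberwise]

theorem IsEquitable.mul_partitionMatrix [Fintype C] [NonAssocSemiring S] {A : Matrix V V S}
    (hA : IsEquitable c A) (hrep : Function.RightInverse rep c) :
    A * partitionMatrix S c = partitionMatrix S c * quotientMatrix c rep A := by
  ext v j
  rw [mul_partitionMatrix_apply, partitionMatrix_mul, Matrix.submatrix_apply, id,
    hA.quotientMatrix_apply hrep]

end Equitable

theorem diagonal_comp_mul_partitionMatrix [DecidableEq V] [Fintype C] [NonAssocSemiring S]
    (c : V → C) (f : C → S) :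
    Matrix.diagonal (f ∘ c) * partitionMatrix S c = partitionMatrix S c * Matrix.diagonal f := by
  ext v j
  by_cases h : c v = j <;> simp [partitionMatrix_apply, h]

end Quotient

section SignedLaplacian

variable {V S : Type*} [Fintype V] [AddCommGroup S]

/-- The Laplacian of a signed graph with signed weights `A` and unsigned weights `B = |A|`: the
degrees are the row sums of `B`. Self-weights `A i i` are allowed, since a quotient graph has them
even when the graph has none. -/
def signedLaplacian [DecidableEq V] (A B : Matrix V V S) : Matrix V V S :=
  Matrix.diagonal (fun i => ∑ k, B i k) - A

theorem signedLaplacian_apply [DecidableEq V] (A B : Matrix V V S) (i j : V) :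
    signedLaplacian A B i j = if i = j then ∑ k, B i k - A i i else -A i j := by
  rw [signedLaplacian, Matrix.sub_apply, Matrix.diagonal_apply]
  split_ifs with h
  · rw [h]
  · rw [zero_sub]

theorem signedLaplacian_quotientMatrix_apply {C : Type*} [Fintype C] [DecidableEq C] (c : V → C)
    (rep : C → V) (A B : Matrix V V S) (i j : C) :
    signedLaplacian (quotientMatrix c rep A) (quotientMatrix c rep B) i j =
      if i = j then ∑ t, B (rep i) t - ∑ t with c t = i, A (rep i) t
      else -∑ t with c t = j, A (rep i) t := by
  rw [signedLaplacian_apply, sum_quotientMatrix]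
  rfl

end SignedLaplacian

theorem signedLaplacian_mul_partitionMatrix {V C S : Type*} [Fintype V] [DecidableEq V]
    [Fintype C] [DecidableEq C] [NonAssocRing S] {c : V → C} {rep : C → V} {A B : Matrix V V S}
    (hA : IsEquitable c A) (hB : IsEquitable c B) (hrep : Function.RightInverse rep c) :
    signedLaplacian A B * partitionMatrix S c =
      partitionMatrix S c *
        signedLaplacian (quotientMatrix c rep A) (quotientMatrix c rep B) := by
  have degree_eq : (fun v => ∑ t, B v t) = (fun i => ∑ j, quotientMatrix c rep B i j) ∘ c :=
    funext fun v => (hB.sum_quotientMatrix hrep v).symm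
  rw [signedLaplacian, signedLaplacian, Matrix.sub_mul, Matrix.mul_sub,
    hA.mul_partitionMatrix hrep, degree_eq, diagonal_comp_mul_partitionMatrix]

section BlockMatrix

variable {I J K ι R : Type*}

theorem eq_comp_of_apply {κ : Type*} {L : Matrix (I × ι) (J × κ) R} {M : Matrix I J (Matrix ι κ R)}
    (h : ∀ i j a b, L (i, a) (j, b) = M i j a b) : L = Matrix.comp I J ι κ R M :=
  Matrix.ext fun ia jb => h ia.1 jb.1 ia.2 jb.2

theorem comp_mul_comp [Fintype J] [Fintype ι] [NonUnitalNonAssocSemiring R]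
    (M : Matrix I J (Matrix ι ι R)) (N : Matrix J K (Matrix ι ι R)) :
    Matrix.comp I J ι ι R M * Matrix.comp J K ι ι R N = Matrix.comp I K ι ι R (M * N) := by
  ext ⟨i, a⟩ ⟨k, b⟩
  simp only [Matrix.comp_apply, Matrix.mul_apply, Matrix.sum_apply, Fintype.sum_prod_type]

theorem map_range_mulVecLin_le_of_mul_eq_mul {m k : Type*} [Fintype m] [Fintype k]
    [CommSemiring R] {M : Matrix m m R} {P : Matrix m k R} {N : Matrix k k R}
    (h : M * P = P * N) :
    Submodule.map M.mulVecLin (LinearMap.range P.mulVecLin) ≤ LinearMap.range P.mulVecLin := by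
  rw [← LinearMap.range_comp, ← Matrix.mulVecLin_mul, h, Matrix.mulVecLin_mul]
  exact LinearMap.range_comp_le_range _ _

theorem eq_comp_signedLaplacian {V : Type*} [Fintype V] [DecidableEq V] [AddCommGroup R]
    {A B : Matrix V V (Matrix ι ι R)} (hA : ∀ i, A i i = 0) {L : Matrix (V × ι) (V × ι) R}
    (hL : ∀ i j a b, L (i, a) (j, b) = if i = j then (∑ k, B i k) a b else (-A i j) a b) :
    L = Matrix.comp V V ι ι R (signedLaplacian A B) := by
  refine eq_comp_of_apply fun i j a b => ?_
  rw [hL, signedLaplacian_apply, hA, sub_zero]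
  split_ifs <;> rfl

theorem eq_comp_signedLaplacian_quotientMatrix {V C : Type*} [Fintype V] [Fintype C]
    [DecidableEq C] [AddCommGroup R] {c : V → C} {rep : C → V} {A B : Matrix V V (Matrix ι ι R)}
    {Lπ : Matrix (C × ι) (C × ι) R}
    (hLπ : ∀ i j a b, Lπ (i, a) (j, b) =
      if i = j then (∑ t, B (rep i) t - ∑ t with c t = i, A (rep i) t) a b
      else (-∑ t with c t = j, A (rep i) t) a b) :
    Lπ = Matrix.comp C C ι ι R
      (signedLaplacian (quotientMatrix c rep A) (quotientMatrix c rep B)) := by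
  refine eq_comp_of_apply fun i j a b => ?_
  rw [hLπ, signedLaplacian_quotientMatrix_apply]
  split_ifs <;> rfl

theorem charM_eq_comp_partitionMatrix (n s d : ℕ) (c : Fin n → Fin s) :
    charM n s d c =
      Matrix.comp (Fin n) (Fin s) (Fin d) (Fin d) ℝ (partitionMatrix _ c) := by
  refine eq_comp_of_apply fun i j a b => ?_
  by_cases h : c i = j <;> simp [charM, partitionMatrix_apply, h, Matrix.one_apply]

end BlockMatrix

theorem lemma1_quotient_commutation_general {V C ι R : Type*} [Fintype V] [DecidableEq V]
    [Fintype C] [DecidableEq C] [Fintype ι] [DecidableEq ι] [CommRing R]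
    {A B : Matrix V V (Matrix ι ι R)} {c : V → C} {rep : C → V}
    (hA : IsEquitable c A) (hB : IsEquitable c B) (hrep : Function.RightInverse rep c) :
    let L := Matrix.comp V V ι ι R (signedLaplacian A B)
    let P := Matrix.comp V C ι ι R (partitionMatrix _ c)
    let Lπ := Matrix.comp C C ι ι R
      (signedLaplacian (quotientMatrix c rep A) (quotientMatrix c rep B))
    L * P = P * Lπ ∧
      Submodule.map L.mulVecLin (LinearMap.range P.mulVecLin) ≤ LinearMap.range P.mulVecLin := by
  intro L P Lπ
  have commutation : L * P = P * Lπ := by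
    rw [comp_mul_comp, comp_mul_comp, signedLaplacian_mul_partitionMatrix hA hB hrep]
  exact ⟨commutation, map_range_mulVecLin_le_of_mul_eq_mul commutation⟩

/-- Lemma 1: for an equitable partition of a matrix-weighted signed graph,
`L · P_π = P_π · L_π` and the column space of `P_π` is `L`-invariant. -/
theorem lemma1_quotient_commutation {n s d : ℕ}
    (𝒜 : Fin n → Fin n → Matrix (Fin d) (Fin d) ℝ)
    (σ : Fin n → Fin n → ℝ)
    (hAdiag : ∀ i, 𝒜 i i = 0)
    (hAsym : ∀ i j, 𝒜 i j = 𝒜 j i)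
    (hAsymEach : ∀ i j, (𝒜 i j)ᵀ = 𝒜 i j)
    (hσsym : ∀ i j, σ i j = σ j i)
    (hσval : ∀ i j, σ i j = 1 ∨ σ i j = -1)
    (hpsd : ∀ i j, (σ i j • 𝒜 i j).PosSemidef)
    (c : Fin n → Fin s) (hc : Function.Surjective c)
    (hEP : ∀ r r', c r = c r' → ∀ j : Fin s,
      (∑ t ∈ Finset.univ.filter (fun t => c t = j), 𝒜 r t
        = ∑ t ∈ Finset.univ.filter (fun t => c t = j), 𝒜 r' t) ∧
      (∑ t ∈ Finset.univ.filter (fun t => c t = j), σ r t • 𝒜 r t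
        = ∑ t ∈ Finset.univ.filter (fun t => c t = j), σ r' t • 𝒜 r' t))
    (L : Matrix (Fin n × Fin d) (Fin n × Fin d) ℝ)
    (hL : ∀ i j a b, L (i, a) (j, b) =
      if i = j then (∑ k, σ i k • 𝒜 i k) a b else (-𝒜 i j) a b)
    (rep : Fin s → Fin n) (hrep : ∀ i, c (rep i) = i)
    (Lπ : Matrix (Fin s × Fin d) (Fin s × Fin d) ℝ)
    (hLπ : ∀ i j a b, Lπ (i, a) (j, b) =
      if i = j then
        ((∑ t, σ (rep i) t • 𝒜 (rep i) t)
          - ∑ t ∈ Finset.univ.filter (fun t => c t = i), 𝒜 (rep i) t) a b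
      else (-(∑ t ∈ Finset.univ.filter (fun t => c t = j), 𝒜 (rep i) t)) a b) :
    L * charM n s d c = charM n s d c * Lπ ∧
      Submodule.map L.mulVecLin (LinearMap.range (charM n s d c).mulVecLin)
        ≤ LinearMap.range (charM n s d c).mulVecLin := by
  let A := Matrix.of 𝒜
  let absA := Matrix.of fun i j => σ i j • 𝒜 i j
  rw [charM_eq_comp_partitionMatrix, eq_comp_signedLaplacian (A := A) (B := absA) hAdiag hL,
    eq_comp_signedLaplacian_quotientMatrix (A := A) (B := absA) hLπ]
  exact lemma1_quotient_commutation_general (fun r r' h j => (hEP r r' h j).1)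
    (fun r r' h j => (hEP r r' h j).2) hrep
end

section
/- Suppose L · P_π = P_π · L_π, where L_π ∈ ℝ^{(s·d)×(s·d)} has d×d blocks (L_π)_{ij}. Suppose there exist Q₁ ∈ ℝ^{q×q} with A·C = C·Q₁ and matrices Q'_{ij} ∈ ℝ^{q×q} (i, j ∈ Fin s) with B·K·(L_π)_{ij}·C = C·Q'_{ij} for all i, j. Let Q ∈ ℝ^{(s·q)×(s·q)} be the block matrix whose (i,j) block is (if i = j then Q₁ else 0) − Q'_{ij}. Then L̃ · P̃ = P̃ · Q, and consequently the column space of P̃ is invariant under the linear map x ↦ L̃.mulVec x. -/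
open Matrix

/-- Block diagonal matrix with `n` copies of `X` on the diagonal. -/
noncomputable def bdiag (n : ℕ) {d q : ℕ} (X : Matrix (Fin d) (Fin q) ℝ) :
    Matrix (Fin n × Fin d) (Fin n × Fin q) ℝ :=
  fun ia jb => if ia.1 = jb.1 then X ia.2 jb.2 else 0

/-- The `(i,j)` block of a block matrix. -/
noncomputable def blockOf {n s d e : ℕ} (L : Matrix (Fin n × Fin d) (Fin s × Fin e) ℝ)
    (i : Fin n) (j : Fin s) : Matrix (Fin d) (Fin e) ℝ :=
  fun a b => L (i, a) (j, b)

/-!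
In Kronecker form the characteristic matrix is `P ⊗ₖ 1` and a block-diagonal matrix with constant
blocks is `1 ⊗ₖ X`, so the two commute. Hence `P ⊗ₖ 1` intertwines `L̃` with its quotient
`1 ⊗ₖ A - (1 ⊗ₖ B * K) * L_π`; working block by block, `1 ⊗ₖ C` intertwines that quotient with `Q`;
and intertwining relations compose.
-/

open scoped Kronecker

section Intertwining

variable {l m n R : Type*} [Fintype l] [Fintype m] [Fintype n]

theorem mul_mul_eq_mul_mul_of_intertwining [NonUnitalSemiring R] {X : Matrix l l R}
    {Y : Matrix m m R} {Z : Matrix n n R} {S : Matrix l m R} {T : Matrix m n R}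
    (hS : X * S = S * Y) (hT : Y * T = T * Z) : X * (S * T) = S * T * Z := by
  rw [← Matrix.mul_assoc, hS, Matrix.mul_assoc, hT, Matrix.mul_assoc]

theorem map_range_mulVecLin_le_of_mul_eq_mul_s1 [CommSemiring R] {X : Matrix m m R}
    {Y : Matrix n n R} {T : Matrix m n R} (h : X * T = T * Y) :
    Submodule.map X.mulVecLin (LinearMap.range T.mulVecLin) ≤ LinearMap.range T.mulVecLin := by
  rw [← LinearMap.range_comp, ← mulVecLin_mul, h, mulVecLin_mul]
  exact LinearMap.range_comp_le_range _ _

end Intertwining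

section Blocks

variable {I J k l m R : Type*}

theorem one_kronecker_mul_comp [Fintype I] [DecidableEq I] [Fintype l] [NonAssocSemiring R]
    (X : Matrix k l R) (M : Matrix I J (Matrix l m R)) :
    ((1 : Matrix I I R) ⊗ₖ X) * comp I J l m R M = comp I J k m R (of fun i j => X * M i j) := by
  ext ⟨i, a⟩ ⟨j, b⟩
  simp [mul_apply, Fintype.sum_prod_type, one_apply]

theorem comp_mul_one_kronecker [Fintype J] [DecidableEq J] [Fintype l] [NonAssocSemiring R]
    (M : Matrix I J (Matrix k l R)) (X : Matrix l m R) :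
    comp I J k l R M * ((1 : Matrix J J R) ⊗ₖ X) = comp I J k m R (of fun i j => M i j * X) := by
  ext ⟨i, a⟩ ⟨j, b⟩
  simp [mul_apply, Fintype.sum_prod_type, one_apply]

theorem kronecker_one_mul_one_kronecker [Fintype J] [DecidableEq J] [Fintype k] [DecidableEq k]
    [CommSemiring R] (P : Matrix I J R) (X : Matrix k l R) :
    (P ⊗ₖ (1 : Matrix k k R)) * ((1 : Matrix J J R) ⊗ₖ X) = P ⊗ₖ X := by
  rw [← mul_kronecker_mul, Matrix.mul_one, Matrix.one_mul]

theorem one_kronecker_mul_kronecker_one [Fintype I] [DecidableEq I] [Fintype J] [DecidableEq J]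
    [Fintype k] [DecidableEq k] [Fintype l] [DecidableEq l] [CommSemiring R]
    (X : Matrix k l R) (P : Matrix I J R) :
    ((1 : Matrix I I R) ⊗ₖ X) * (P ⊗ₖ (1 : Matrix l l R)) =
      (P ⊗ₖ (1 : Matrix k k R)) * ((1 : Matrix J J R) ⊗ₖ X) := by
  rw [kronecker_one_mul_one_kronecker, ← mul_kronecker_mul, Matrix.one_mul, Matrix.mul_one]

end Blocks

section ClosedLoop

variable {I J k l R : Type*} [Fintype I] [DecidableEq I] [Fintype J] [DecidableEq J]
  [Fintype k] [Fintype l] [CommRing R]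

/-- The matrix `L̃` of identical agents with internal dynamics `A` coupled through `L`. The product
`B * K` of input matrix and feedback gain enters as the single matrix `G`, and block-diagonal
matrices with constant blocks are written as Kronecker products with `1`. -/
def closedLoop (A G : Matrix k k R) (L : Matrix (I × k) (I × k) R) : Matrix (I × k) (I × k) R :=
  1 ⊗ₖ A - (1 ⊗ₖ G) * L

theorem closedLoop_mul_kronecker_one [DecidableEq k] (A G : Matrix k k R) {P : Matrix I J R}
    {L : Matrix (I × k) (I × k) R} {L' : Matrix (J × k) (J × k) R}
    (hL : L * (P ⊗ₖ (1 : Matrix k k R)) = (P ⊗ₖ (1 : Matrix k k R)) * L') :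
    closedLoop A G L * (P ⊗ₖ (1 : Matrix k k R)) =
      (P ⊗ₖ (1 : Matrix k k R)) * closedLoop A G L' := by
  rw [closedLoop, closedLoop, Matrix.sub_mul, Matrix.mul_sub, one_kronecker_mul_kronecker_one,
    Matrix.mul_assoc, hL, ← Matrix.mul_assoc, one_kronecker_mul_kronecker_one, Matrix.mul_assoc]

theorem closedLoop_comp_mul_one_kronecker {A G : Matrix k k R} {C : Matrix k l R}
    {M : Matrix J J (Matrix k k R)} {Q₁ : Matrix l l R} {Q' : Matrix J J (Matrix l l R)}
    (hA : A * C = C * Q₁) (hM : ∀ i j, G * M i j * C = C * Q' i j) :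
    closedLoop A G (comp J J k k R M) * ((1 : Matrix J J R) ⊗ₖ C) =
      ((1 : Matrix J J R) ⊗ₖ C) * (1 ⊗ₖ Q₁ - comp J J l l R Q') := by
  have internal_part : ((1 : Matrix J J R) ⊗ₖ A) * ((1 : Matrix J J R) ⊗ₖ C) =
      ((1 : Matrix J J R) ⊗ₖ C) * ((1 : Matrix J J R) ⊗ₖ Q₁) := by
    simp only [← mul_kronecker_mul, hA]
  have coupling_part : ((1 : Matrix J J R) ⊗ₖ G) * comp J J k k R M * ((1 : Matrix J J R) ⊗ₖ C) =
      ((1 : Matrix J J R) ⊗ₖ C) * comp J J l l R Q' := by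
    simp only [one_kronecker_mul_comp, comp_mul_one_kronecker, of_apply, hM]
  rw [closedLoop, Matrix.sub_mul, Matrix.mul_sub, internal_part, coupling_part]

theorem lemma2_intertwining_general [DecidableEq k] {P : Matrix I J R} {A G : Matrix k k R}
    {C : Matrix k l R} {L : Matrix (I × k) (I × k) R} {M : Matrix J J (Matrix k k R)}
    (hL : L * (P ⊗ₖ (1 : Matrix k k R)) = (P ⊗ₖ (1 : Matrix k k R)) * comp J J k k R M)
    {Q₁ : Matrix l l R} (hA : A * C = C * Q₁)
    {Q' : Matrix J J (Matrix l l R)} (hM : ∀ i j, G * M i j * C = C * Q' i j) :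
    closedLoop A G L * (P ⊗ₖ C) = (P ⊗ₖ C) * (1 ⊗ₖ Q₁ - comp J J l l R Q') ∧
      Submodule.map (closedLoop A G L).mulVecLin (LinearMap.range (P ⊗ₖ C).mulVecLin) ≤
        LinearMap.range (P ⊗ₖ C).mulVecLin := by
  have intertwining :
      closedLoop A G L * (P ⊗ₖ C) = (P ⊗ₖ C) * (1 ⊗ₖ Q₁ - comp J J l l R Q') := by
    rw [← kronecker_one_mul_one_kronecker P C]
    exact mul_mul_eq_mul_mul_of_intertwining
      (closedLoop_mul_kronecker_one A G hL) (closedLoop_comp_mul_one_kronecker hA hM)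
  exact ⟨intertwining, map_range_mulVecLin_le_of_mul_eq_mul_s1 intertwining⟩

end ClosedLoop

theorem charM_eq_kronecker (n s d : ℕ) (c : Fin n → Fin s) :
    charM n s d c = (of fun i j => if c i = j then (1 : ℝ) else 0) ⊗ₖ 1 := by
  ext ⟨i, a⟩ ⟨j, b⟩
  simp [charM, one_apply, ← ite_and, and_comm]

theorem bdiag_eq_one_kronecker (n : ℕ) {d q : ℕ} (X : Matrix (Fin d) (Fin q) ℝ) :
    bdiag n X = 1 ⊗ₖ X := by
  ext ⟨i, a⟩ ⟨j, b⟩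
  simp [bdiag, one_apply]

theorem charM_mul_bdiag {n s d q : ℕ} (c : Fin n → Fin s) (C : Matrix (Fin d) (Fin q) ℝ) :
    charM n s d c * bdiag s C = (of fun i j => if c i = j then (1 : ℝ) else 0) ⊗ₖ C := by
  rw [charM_eq_kronecker, bdiag_eq_one_kronecker, kronecker_one_mul_one_kronecker]

theorem eq_one_kronecker_sub_comp {J l R : Type*} [DecidableEq J] [NonAssocRing R]
    {Q : Matrix (J × l) (J × l) R} {Q₁ : Matrix l l R} {Q' : Matrix J J (Matrix l l R)}
    (hQ : ∀ i j a b, Q (i, a) (j, b) = ((if i = j then Q₁ else 0) - Q' i j) a b) :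
    Q = 1 ⊗ₖ Q₁ - comp J J l l R Q' := by
  ext ⟨i, a⟩ ⟨j, b⟩
  by_cases hij : i = j <;> simp [hQ, hij]

/-- Lemma 2: if `L P_π = P_π L_π`, `A C = C Q₁` and `B K (L_π)_{ij} C = C Q'_{ij}`,
then `L̃ P̃ = P̃ Q` and the column space of `P̃` is `L̃`-invariant. -/
theorem lemma2_intertwining {n s d p q : ℕ}
    (c : Fin n → Fin s) (hc : Function.Surjective c)
    (A : Matrix (Fin d) (Fin d) ℝ) (B : Matrix (Fin d) (Fin p) ℝ)
    (K : Matrix (Fin p) (Fin d) ℝ) (C : Matrix (Fin d) (Fin q) ℝ)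
    (L : Matrix (Fin n × Fin d) (Fin n × Fin d) ℝ)
    (Lπ : Matrix (Fin s × Fin d) (Fin s × Fin d) ℝ)
    (hLP : L * charM n s d c = charM n s d c * Lπ)
    (Q₁ : Matrix (Fin q) (Fin q) ℝ)
    (hQ₁ : A * C = C * Q₁)
    (Q' : Fin s → Fin s → Matrix (Fin q) (Fin q) ℝ)
    (hQ' : ∀ i j, B * K * blockOf Lπ i j * C = C * Q' i j)
    (Q : Matrix (Fin s × Fin q) (Fin s × Fin q) ℝ)
    (hQ : ∀ (i j : Fin s) (a b : Fin q),
      Q (i, a) (j, b) = ((if i = j then Q₁ else 0) - Q' i j) a b) :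
    (bdiag n A - bdiag n (B * K) * L) * (charM n s d c * bdiag s C)
        = (charM n s d c * bdiag s C) * Q ∧
      Submodule.map (bdiag n A - bdiag n (B * K) * L).mulVecLin
          (LinearMap.range (charM n s d c * bdiag s C).mulVecLin)
        ≤ LinearMap.range (charM n s d c * bdiag s C).mulVecLin := by
  rw [charM_eq_kronecker] at hLP
  rw [charM_mul_bdiag, bdiag_eq_one_kronecker, bdiag_eq_one_kronecker, eq_one_kronecker_sub_comp hQ]
  exact lemma2_intertwining_general (M := of (blockOf Lπ)) hLP hQ₁ hQ'
end

section
/- Suppose L · P_π = P_π · L_π, A·C = C·Q₁, and B·K·(L_π)_{ij}·C = C·Q'_{ij} for all i, j ∈ Fin s (i.e., the matrix Q of Lemma 2 exists), and suppose every leader is a singleton cell. Then the controllable subspace satisfies W ⊆ range(P̃.mulVecLin), the column space of P̃. -/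
open Matrix

/-- Input matrix `M̃` with block `C` at position `(l,l)` for each leader `l ∈ Fin m`. -/
noncomputable def inputM (n m d q : ℕ) (h : m ≤ n) (C : Matrix (Fin d) (Fin q) ℝ) :
    Matrix (Fin n × Fin d) (Fin m × Fin q) ℝ :=
  fun ia lb => if ia.1 = Fin.castLE h lb.1 then C ia.2 lb.2 else 0

/-!
The column space of `P̃` is invariant under `L̃`: the block conditions on `A * C` and
`B * K * (L_π)ᵢⱼ * C` assemble into a matrix `Q` with `L̃ * P̃ = P̃ * Q`. A leader is alone in its
cell, so the columns of `P̃` belonging to that cell are exactly the leader's columns of `M̃`. Thus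
`range P̃` is an `L̃`-invariant subspace containing `range M̃`, and the controllable subspace is the
least such subspace.

Block structure is expressed by Kronecker products: `blockDiag(X) = 1 ⊗ₖ X`, `P_π = χ ⊗ₖ 1`,
`P̃ = χ ⊗ₖ C` and `M̃ = J ⊗ₖ C`, where `χ` is the agent-cell incidence matrix and the columns of `J`
are the standard basis vectors of the leaders. The `(i, j)` block of `G` is
`(Matrix.comp ..).symm G i j`, and `F` stands for `B * K`.
-/

open scoped Kronecker

local notation "I[" ι "]" => (1 : Matrix ι ι _)

section ControllableSubspace

variable {R ι κ μ : Type*} [CommSemiring R] [Fintype κ] [Fintype μ]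

theorem range_mulVecLin_mul_le (P : Matrix ι κ R) (X : Matrix κ μ R) :
    LinearMap.range (P * X).mulVecLin ≤ LinearMap.range P.mulVecLin := by
  rw [mulVecLin_mul]
  exact LinearMap.range_comp_le_range _ _

variable [Fintype ι] [DecidableEq ι]

/-- The controllable subspace of the pair `(T, M)`, spanned by the columns of all `T ^ k * M`. All
powers are taken rather than those below the size of `T`; over a commutative ring the two agree by
Cayley–Hamilton. -/
def controllableSubspace (T : Matrix ι ι R) (M : Matrix ι κ R) : Submodule R (ι → R) :=
  ⨆ k : ℕ, LinearMap.range (T ^ k * M).mulVecLin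

theorem controllableSubspace_le_of_mem_invtSubmodule {T : Matrix ι ι R} {M : Matrix ι κ R}
    {W : Submodule R (ι → R)} (hT : W ∈ Module.End.invtSubmodule T.mulVecLin)
    (hM : LinearMap.range M.mulVecLin ≤ W) : controllableSubspace T M ≤ W := by
  refine iSup_le fun k => ?_
  induction k with
  | zero => rwa [pow_zero, Matrix.one_mul]
  | succ k ih =>
    rw [pow_succ', Matrix.mul_assoc, mulVecLin_mul, LinearMap.range_comp]
    exact (Submodule.map_mono ih).trans ((Module.End.mem_invtSubmodule_iff_map_le _).mp hT)

theorem controllableSubspace_mul_le_range {T : Matrix ι ι R} {P : Matrix ι μ R}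
    {Q : Matrix μ μ R} (hTP : T * P = P * Q) (X : Matrix μ κ R) :
    controllableSubspace T (P * X) ≤ LinearMap.range P.mulVecLin := by
  refine controllableSubspace_le_of_mem_invtSubmodule ?_ (range_mulVecLin_mul_le P X)
  rw [Module.End.mem_invtSubmodule_iff_map_le, ← LinearMap.range_comp, ← mulVecLin_mul, hTP]
  exact range_mulVecLin_mul_le P Q

end ControllableSubspace

section Blocks

variable {α S S' D D' E E' : Type*}

theorem comp_symm_one_kronecker_mul [NonAssocSemiring α] [Fintype S] [DecidableEq S] [Fintype E]
    (X : Matrix D E α) (M : Matrix (S × E) (S' × E') α) (i : S) (j : S') :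
    (comp S S' D E' α).symm ((I[S] ⊗ₖ X) * M) i j = X * (comp S S' E E' α).symm M i j := by
  ext a b
  simp [Matrix.mul_apply, Fintype.sum_prod_type, Matrix.one_apply, Finset.sum_ite_irrel]

theorem comp_symm_mul_one_kronecker [NonAssocSemiring α] [Fintype S'] [DecidableEq S'] [Fintype D']
    (M : Matrix (S × D) (S' × D') α) (X : Matrix D' E' α) (i : S) (j : S') :
    (comp S S' D E' α).symm (M * (I[S'] ⊗ₖ X)) i j = (comp S S' D D' α).symm M i j * X := by
  ext a b
  simp [Matrix.mul_apply, Fintype.sum_prod_type, Matrix.one_apply, Finset.sum_ite_irrel]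

theorem one_kronecker_mul_mul_one_kronecker_eq {H : Type*} [NonAssocSemiring α]
    [Fintype S] [DecidableEq S] [Fintype S'] [DecidableEq S'] [Fintype D'] [Fintype E] [Fintype H]
    {X : Matrix D E α} {M : Matrix (S × E) (S' × D') α} {Y : Matrix D' E' α}
    {Z : Matrix D H α} {Q : S → S' → Matrix H E' α}
    (hQ : ∀ i j, X * (comp S S' E D' α).symm M i j * Y = Z * Q i j) :
    (I[S] ⊗ₖ X) * M * (I[S'] ⊗ₖ Y) = (I[S] ⊗ₖ Z) * comp S S' H E' α (of Q) := by
  apply (comp S S' D E' α).symm.injective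
  ext1 i j
  rw [comp_symm_mul_one_kronecker, comp_symm_one_kronecker_mul, comp_symm_one_kronecker_mul,
    Equiv.symm_apply_apply, of_apply, hQ]

end Blocks

section Intertwining

variable {R N S D E : Type*} [CommSemiring R] [Fintype N] [DecidableEq N] [Fintype S] [Fintype D]
  [Fintype E]

theorem one_kronecker_mul_kronecker_eq [DecidableEq S] {A : Matrix D D R}
    {C : Matrix D E R} {Q : Matrix E E R} (hQ : A * C = C * Q) (χ : Matrix N S R) :
    (I[N] ⊗ₖ A) * (χ ⊗ₖ C) = (χ ⊗ₖ C) * (I[S] ⊗ₖ Q) := by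
  rw [← mul_kronecker_mul, ← mul_kronecker_mul, Matrix.one_mul, Matrix.mul_one, hQ]

theorem one_kronecker_mul_mul_kronecker_eq [DecidableEq D] {F : Matrix D D R}
    {C : Matrix D E R} {L : Matrix (N × D) (N × D) R} {G : Matrix (S × D) (S × D) R}
    {Q : S → S → Matrix E E R} {χ : Matrix N S R} (hL : L * (χ ⊗ₖ I[D]) = (χ ⊗ₖ I[D]) * G)
    (hQ : ∀ i j, F * (comp S S D D R).symm G i j * C = C * Q i j) :
    (I[N] ⊗ₖ F) * L * (χ ⊗ₖ C) = (χ ⊗ₖ C) * comp S S E E R (of Q) := by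
  classical
  have hχC : χ ⊗ₖ C = (χ ⊗ₖ I[D]) * (I[S] ⊗ₖ C) := by
    rw [← mul_kronecker_mul, Matrix.mul_one, Matrix.one_mul]
  have hFχ : (I[N] ⊗ₖ F) * (χ ⊗ₖ I[D]) = (χ ⊗ₖ I[D]) * (I[S] ⊗ₖ F) :=
    one_kronecker_mul_kronecker_eq ((Matrix.mul_one F).trans (Matrix.one_mul F).symm) χ
  calc (I[N] ⊗ₖ F) * L * (χ ⊗ₖ C)
      = (I[N] ⊗ₖ F) * (L * (χ ⊗ₖ I[D])) * (I[S] ⊗ₖ C) := by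
        simp only [hχC, Matrix.mul_assoc]
    _ = (I[N] ⊗ₖ F) * (χ ⊗ₖ I[D]) * (G * (I[S] ⊗ₖ C)) := by
        simp only [hL, Matrix.mul_assoc]
    _ = (χ ⊗ₖ I[D]) * ((I[S] ⊗ₖ F) * G * (I[S] ⊗ₖ C)) := by
        simp only [hFχ, Matrix.mul_assoc]
    _ = (χ ⊗ₖ C) * comp S S E E R (of Q) := by
        rw [one_kronecker_mul_mul_one_kronecker_eq hQ, ← Matrix.mul_assoc, ← hχC]

end Intertwining

section FunMatrix

variable {N S ι : Type*} [DecidableEq S] (R : Type*)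

/-- The 0-1 matrix of a map `f`, with a one at `(i, f i)` in each row. For the map sending agents to
their cells it is the incidence matrix `χ`; for the inclusion of the leaders into the agents it is
the transpose of `J`. -/
def funMatrix [Zero R] [One R] (f : N → S) : Matrix N S R :=
  I[S].submatrix f id

theorem funMatrix_mul_transpose_comp [NonAssocSemiring R] [DecidableEq N] [Fintype S] {c : N → S}
    {ℓ : ι → N} (hℓ : ∀ l t, c t = c (ℓ l) → t = ℓ l) :
    funMatrix R c * (funMatrix R (c ∘ ℓ))ᵀ = (funMatrix R ℓ)ᵀ := by
  ext t l
  have hiff : c t = c (ℓ l) ↔ ℓ l = t := ⟨fun h => (hℓ l t h).symm, fun h => h ▸ rfl⟩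
  simp [funMatrix, Matrix.mul_apply, Matrix.one_apply, hiff]

theorem transpose_funMatrix_kronecker [CommSemiring R] [DecidableEq N] [Fintype S]
    {D E : Type*} [Fintype E] [DecidableEq E] {c : N → S} {ℓ : ι → N}
    (hℓ : ∀ l t, c t = c (ℓ l) → t = ℓ l) (C : Matrix D E R) :
    (funMatrix R ℓ)ᵀ ⊗ₖ C =
      (funMatrix R c ⊗ₖ C) * ((funMatrix R (c ∘ ℓ))ᵀ ⊗ₖ I[E]) := by
  rw [← mul_kronecker_mul, funMatrix_mul_transpose_comp R hℓ, Matrix.mul_one]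

end FunMatrix

section KroneckerForm

variable {n s d q m : ℕ}

theorem charM_eq_kronecker_s2 (c : Fin n → Fin s) :
    charM n s d c = funMatrix ℝ c ⊗ₖ I[Fin d] := by
  ext ⟨i, a⟩ ⟨j, b⟩
  simp [charM, funMatrix, Matrix.one_apply, ← ite_and, and_comm]

theorem bdiag_eq_kronecker (X : Matrix (Fin d) (Fin q) ℝ) :
    bdiag n X = I[Fin n] ⊗ₖ X := by
  ext ⟨i, a⟩ ⟨j, b⟩
  simp [bdiag, Matrix.one_apply]

theorem inputM_eq_kronecker (hm : m ≤ n) (C : Matrix (Fin d) (Fin q) ℝ) :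
    inputM n m d q hm C = (funMatrix ℝ (Fin.castLE hm))ᵀ ⊗ₖ C := by
  ext ⟨i, a⟩ ⟨l, b⟩
  simp [inputM, funMatrix, Matrix.one_apply]

theorem charM_mul_bdiag_eq_kronecker (c : Fin n → Fin s) (C : Matrix (Fin d) (Fin q) ℝ) :
    charM n s d c * bdiag s C = funMatrix ℝ c ⊗ₖ C := by
  rw [charM_eq_kronecker_s2, bdiag_eq_kronecker, ← mul_kronecker_mul, Matrix.mul_one, Matrix.one_mul]

end KroneckerForm

theorem theorem1_controllable_subspace_general {R N S D E ι : Type*} [CommRing R]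
    [Fintype N] [DecidableEq N] [Fintype S] [DecidableEq S] [Fintype D] [DecidableEq D]
    [Fintype E] [Fintype ι] {c : N → S} {ℓ : ι → N}
    {A F : Matrix D D R} {C : Matrix D E R} {L : Matrix (N × D) (N × D) R}
    {Lπ : Matrix (S × D) (S × D) R}
    (hLP : L * (funMatrix R c ⊗ₖ I[D]) = (funMatrix R c ⊗ₖ I[D]) * Lπ)
    {Q₁ : Matrix E E R} (hQ₁ : A * C = C * Q₁) {Q' : S → S → Matrix E E R}
    (hQ' : ∀ i j, F * (comp S S D D R).symm Lπ i j * C = C * Q' i j)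
    (hlead : ∀ l t, c t = c (ℓ l) → t = ℓ l) :
    controllableSubspace (I[N] ⊗ₖ A - (I[N] ⊗ₖ F) * L) ((funMatrix R ℓ)ᵀ ⊗ₖ C) ≤
      LinearMap.range (funMatrix R c ⊗ₖ C).mulVecLin := by
  classical
  have hinv : (I[N] ⊗ₖ A - (I[N] ⊗ₖ F) * L) * (funMatrix R c ⊗ₖ C) =
      (funMatrix R c ⊗ₖ C) * (I[S] ⊗ₖ Q₁ - comp S S E E R (of Q')) := by
    rw [Matrix.sub_mul, Matrix.mul_sub, one_kronecker_mul_kronecker_eq hQ₁,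
      one_kronecker_mul_mul_kronecker_eq hLP hQ']
  rw [transpose_funMatrix_kronecker R hlead]
  exact controllableSubspace_mul_le_range hinv _

/-- Theorem 1: under the intertwining conditions, the controllable subspace of
`(L̃, M̃)` is contained in the column space of `P̃`. -/
theorem theorem1_controllable_subspace {n s d p q m : ℕ} (hm : m ≤ n)
    (c : Fin n → Fin s) (hc : Function.Surjective c)
    (A : Matrix (Fin d) (Fin d) ℝ) (B : Matrix (Fin d) (Fin p) ℝ)
    (K : Matrix (Fin p) (Fin d) ℝ) (C : Matrix (Fin d) (Fin q) ℝ)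
    (L : Matrix (Fin n × Fin d) (Fin n × Fin d) ℝ)
    (Lπ : Matrix (Fin s × Fin d) (Fin s × Fin d) ℝ)
    (hLP : L * charM n s d c = charM n s d c * Lπ)
    (Q₁ : Matrix (Fin q) (Fin q) ℝ)
    (hQ₁ : A * C = C * Q₁)
    (Q' : Fin s → Fin s → Matrix (Fin q) (Fin q) ℝ)
    (hQ' : ∀ i j, B * K * blockOf Lπ i j * C = C * Q' i j)
    (hlead : ∀ l : Fin m, ∀ t : Fin n,
      c t = c (Fin.castLE hm l) → t = Fin.castLE hm l) :
    (⨆ k ∈ Finset.range (n * d),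
        LinearMap.range
          (((bdiag n A - bdiag n (B * K) * L) ^ k * inputM n m d q hm C).mulVecLin))
      ≤ LinearMap.range (charM n s d c * bdiag s C).mulVecLin := by
  rw [charM_eq_kronecker_s2] at hLP
  rw [charM_mul_bdiag_eq_kronecker, inputM_eq_kronecker, bdiag_eq_kronecker, bdiag_eq_kronecker]
  exact (iSup₂_le_iSup _ _).trans (theorem1_controllable_subspace_general hLP hQ₁ hQ' hlead)
end

section
/- Let L_g (g ∈ Fin t) be (n·d)×(n·d) real matrices (the Laplacians of the switching topologies), and set L̃_g = blockDiag_n(A) − blockDiag_n(B·K)·L_g. Suppose there is a single partition c : Fin n → Fin s (the least upper bound π_min of the equitable partitions of the subgraphs) such that for every g ∈ Fin t there exists a matrix Q_g ∈ ℝ^{(s·q)×(s·q)} with L̃_g · P̃ = P̃ · Q_g, and suppose every leader is a singleton cell. Define the subspace sequence 𝕎₁ = ⨆_{g} ⟨L̃_g | range(M̃.mulVecLin)⟩ and 𝕎_{i+1} = ⨆_{g} ⟨L̃_g | 𝕎_i⟩. Then 𝕎_i ⊆ range(P̃.mulVecLin) for every i ≥ 1; in particular dim 𝕎_i ≤ s·d,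 so the controllable set 𝒞 = 𝕎_N of the switched system satisfies dim 𝒞 ≤ card(π_min)·d. -/
open Matrix

/-- `⟨F | S⟩`: the smallest `F`-invariant subspace containing `S`,
computed as `Σ_{k=0}^{N-1} F^k S` with `N = n·d`. -/
noncomputable def invHull {n d : ℕ} (F : Matrix (Fin n × Fin d) (Fin n × Fin d) ℝ)
    (S : Submodule ℝ (Fin n × Fin d → ℝ)) : Submodule ℝ (Fin n × Fin d → ℝ) :=
  ⨆ k ∈ Finset.range (n * d), Submodule.map (F ^ k).mulVecLin S

/-!
If `F * P = P * Q`, then the column space of `P` is `F`-invariant, so it contains `⟨F | S⟩` as soon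
as it contains `S`. As every leader is alone in its cell, the block column of `M̃` belonging to a
leader is the block column of `P̃` belonging to the cell of that leader. Hence the iteration
defining `𝕎` starts, and therefore stays, inside the column space of `P̃`.
-/

section ColumnSpace

variable {R k l m : Type*} [CommSemiring R]

theorem range_mulVecLin_mem_invtSubmodule_of_mul_eq [Fintype k] [Fintype l] {F : Matrix k k R}
    {P : Matrix k l R} {Q : Matrix l l R} (h : F * P = P * Q) :
    LinearMap.range P.mulVecLin ∈ Module.End.invtSubmodule F.mulVecLin := by
  rintro _ ⟨v, rfl⟩
  refine ⟨Q *ᵥ v, ?_⟩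
  simp only [mulVecLin_apply, mulVec_mulVec, h]

theorem range_mulVecLin_submatrix_id_le [Fintype l] [Fintype m] (P : Matrix k l R) (f : m → l) :
    LinearMap.range (P.submatrix id f).mulVecLin ≤ LinearMap.range P.mulVecLin := by
  rw [range_mulVecLin, range_mulVecLin]
  exact Submodule.span_mono (Set.range_comp_subset_range f P.col)

theorem rank_mul_le_card_inner [StrongRankCondition R] [Fintype l] [Fintype m]
    (P : Matrix k l R) (D : Matrix l m R) : (P * D).rank ≤ Fintype.card l :=
  (rank_mul_le_left P D).trans (rank_le_card_width P)

end ColumnSpace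

section InvariantHull

variable {n d : ℕ} {F : Matrix (Fin n × Fin d) (Fin n × Fin d) ℝ}
  {S U : Submodule ℝ (Fin n × Fin d → ℝ)}

theorem invHull_le_of_mem_invtSubmodule (hU : U ∈ Module.End.invtSubmodule F.mulVecLin)
    (hSU : S ≤ U) : invHull F S ≤ U := by
  refine iSup₂_le fun k _ => Submodule.map_le_iff_le_comap.mpr fun v hv => ?_
  rw [Submodule.mem_comap, ← toLin'_apply', toLin'_pow]
  exact Module.End.pow_apply_mem_of_forall_mem k hU v (hSU hv)

theorem le_of_succ_eq_iSup_invHull {ι : Sort*}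
    {G : ι → Matrix (Fin n × Fin d) (Fin n × Fin d) ℝ}
    {W : ℕ → Submodule ℝ (Fin n × Fin d → ℝ)}
    (hU : ∀ g, U ∈ Module.End.invtSubmodule (G g).mulVecLin) (hSU : S ≤ U)
    (hone : W 1 = ⨆ g, invHull (G g) S)
    (hsucc : ∀ i, 1 ≤ i → W (i + 1) = ⨆ g, invHull (G g) (W i)) {i : ℕ} (hi : 1 ≤ i) :
    W i ≤ U := by
  induction i, hi using Nat.le_induction with
  | base => exact hone.trans_le (iSup_le fun g => invHull_le_of_mem_invtSubmodule (hU g) hSU)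
  | succ i hi ih =>
    exact (hsucc i hi).trans_le (iSup_le fun g => invHull_le_of_mem_invtSubmodule (hU g) ih)

end InvariantHull

section Partition

variable {n s d q m : ℕ} (c : Fin n → Fin s) (C : Matrix (Fin d) (Fin q) ℝ)

theorem charM_eq_submatrix_one (d : ℕ) :
    charM n s d c =
      (1 : Matrix (Fin s × Fin d) (Fin s × Fin d) ℝ).submatrix (Prod.map c id) id := by
  ext ⟨i, a⟩ ⟨j, b⟩
  simp [charM, one_apply]

theorem charM_mul_bdiag_eq_submatrix :
    charM n s d c * bdiag s C = (bdiag s C).submatrix (Prod.map c id) id := by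
  rw [charM_eq_submatrix_one]
  exact one_submatrix_mul (Prod.map c id) (Equiv.refl _) (bdiag s C)

theorem inputM_eq_submatrix_charM_mul_bdiag (hm : m ≤ n)
    (hlead : ∀ l : Fin m, ∀ r : Fin n, c r = c (Fin.castLE hm l) → r = Fin.castLE hm l) :
    inputM n m d q hm C =
      (charM n s d c * bdiag s C).submatrix id (Prod.map (c ∘ Fin.castLE hm) id) := by
  ext ⟨i, a⟩ ⟨l, b⟩
  have hcell : c i = c (Fin.castLE hm l) ↔ i = Fin.castLE hm l := ⟨hlead l i, congrArg c⟩
  simp [charM_mul_bdiag_eq_submatrix, inputM, bdiag, hcell]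

theorem range_inputM_le_range_charM_mul_bdiag (hm : m ≤ n)
    (hlead : ∀ l : Fin m, ∀ r : Fin n, c r = c (Fin.castLE hm l) → r = Fin.castLE hm l) :
    LinearMap.range (inputM n m d q hm C).mulVecLin ≤
      LinearMap.range (charM n s d c * bdiag s C).mulVecLin := by
  rw [inputM_eq_submatrix_charM_mul_bdiag c C hm hlead]
  exact range_mulVecLin_submatrix_id_le _ _

theorem finrank_range_charM_mul_bdiag_le :
    Module.finrank ℝ (LinearMap.range (charM n s d c * bdiag s C).mulVecLin) ≤ s * d := by
  simpa [Matrix.rank] using rank_mul_le_card_inner (charM n s d c) (bdiag s C)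

end Partition

/-- Theorem 2: for the switched system, each member of the subspace sequence `𝕎_i`
is contained in the column space of `P̃`; in particular its dimension is at most
`card(π_min) · d = s · d`, so the controllable set `𝒞 = 𝕎_N` has dimension at most
`s · d`. -/
theorem theorem2_switching {n s d p q m t : ℕ} (hm : m ≤ n)
    (c : Fin n → Fin s) (hc : Function.Surjective c)
    (A : Matrix (Fin d) (Fin d) ℝ) (B : Matrix (Fin d) (Fin p) ℝ)
    (K : Matrix (Fin p) (Fin d) ℝ) (C : Matrix (Fin d) (Fin q) ℝ)
    (Lg : Fin t → Matrix (Fin n × Fin d) (Fin n × Fin d) ℝ)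
    (Qg : Fin t → Matrix (Fin s × Fin q) (Fin s × Fin q) ℝ)
    (hQg : ∀ g, (bdiag n A - bdiag n (B * K) * Lg g) * (charM n s d c * bdiag s C)
      = (charM n s d c * bdiag s C) * Qg g)
    (hlead : ∀ l : Fin m, ∀ r : Fin n,
      c r = c (Fin.castLE hm l) → r = Fin.castLE hm l)
    (𝕎 : ℕ → Submodule ℝ (Fin n × Fin d → ℝ))
    (h𝕎1 : 𝕎 1 = ⨆ g : Fin t, invHull (bdiag n A - bdiag n (B * K) * Lg g)
      (LinearMap.range (inputM n m d q hm C).mulVecLin))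
    (h𝕎succ : ∀ i, 1 ≤ i →
      𝕎 (i + 1) = ⨆ g : Fin t, invHull (bdiag n A - bdiag n (B * K) * Lg g) (𝕎 i)) :
    ∀ i, 1 ≤ i →
      𝕎 i ≤ LinearMap.range (charM n s d c * bdiag s C).mulVecLin ∧
      Module.finrank ℝ (𝕎 i) ≤ s * d := by
  intro i hi
  have hinv := fun g => range_mulVecLin_mem_invtSubmodule_of_mul_eq (hQg g)
  have hinput := range_inputM_le_range_charM_mul_bdiag c C hm hlead
  have hle := le_of_succ_eq_iSup_invHull hinv hinput h𝕎1 h𝕎succ hi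
  exact ⟨hle, (Submodule.finrank_mono hle).trans (finrank_range_charM_mul_bdiag_le c C)⟩
end

section
/- Let L̃_g (g ∈ Fin t) be (n·d)×(n·d) real matrices and M̃ an (n·d)×(m·q) real matrix, and let L̃* = Σ_{g} L̃_g (the system matrix of the union graph, since Σ_g (blockDiag_n(A) − blockDiag_n(B·K)·L_g) = t·blockDiag_n(A) − blockDiag_n(B·K)·Σ_g L_g). If the union-graph pair (L̃*, M̃) is controllable, i.e. ⨆_{k=0}^{n·d−1} range((L̃*^k · M̃).mulVecLin) = ⊤, then the switched system is controllable: every subspace S ⊆ ℝ^{n·d} that contains range(M̃.mulVecLin) and satisfies S.map(L̃_g.mulVecLin) ≤ S for every g ∈ Fin t must equal ⊤ (equivalently, the smallest subspace containing the columns of M̃ and invariant under every L̃_g — the controllable set of the switched system, i.e. the column span of the matrix W̃_c of all products L̃_{g₁}^{k₁}⋯L̃_{g_j}^{k_j}·M̃ — is all of ℝ^{n·d}). -/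
open Matrix

section InvariantSubmodules

variable {R V U ι : Type*} [Semiring R] [AddCommMonoid V] [Module R V]
  [AddCommMonoid U] [Module R U]

theorem mem_invtSubmodule_sum {s : Finset ι} {f : ι → Module.End R V} {S : Submodule R V}
    (hS : ∀ i ∈ s, S ∈ (f i).invtSubmodule) : S ∈ (∑ i ∈ s, f i).invtSubmodule := by
  intro x hx
  rw [Submodule.mem_comap, LinearMap.sum_apply]
  exact S.sum_mem fun i hi => hS i hi hx

theorem mem_invtSubmodule_pow {f : Module.End R V} {S : Submodule R V}
    (hS : S ∈ f.invtSubmodule) (k : ℕ) : S ∈ (f ^ k).invtSubmodule := by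
  induction k with
  | zero => simp only [pow_zero, Module.End.invtSubmodule.one, Sublattice.mem_top]
  | succ k ih => exact pow_succ f k ▸ Module.End.invtSubmodule.comp _ ih hS

theorem range_comp_le_of_mem_invtSubmodule {f : Module.End R V} {B : U →ₗ[R] V}
    {S : Submodule R V} (hS : S ∈ f.invtSubmodule) (hB : LinearMap.range B ≤ S) :
    LinearMap.range (f ∘ₗ B) ≤ S := by
  rw [LinearMap.range_comp]
  exact (Submodule.map_mono hB).trans ((Module.End.mem_invtSubmodule_iff_map_le f).mp hS)

theorem theorem4_union_implies_switched_general [Fintype ι] (A : ι → Module.End R V)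
    (B : U →ₗ[R] V) (hctrb : ⨆ k : ℕ, LinearMap.range (((∑ i, A i) ^ k) ∘ₗ B) = ⊤)
    (S : Submodule R V) (hB : LinearMap.range B ≤ S) (hA : ∀ i, S ∈ (A i).invtSubmodule) :
    S = ⊤ := by
  have hsum : S ∈ (∑ i, A i).invtSubmodule := mem_invtSubmodule_sum fun i _ => hA i
  rw [eq_top_iff, ← hctrb]
  exact iSup_le fun k => range_comp_le_of_mem_invtSubmodule (mem_invtSubmodule_pow hsum k) hB

end InvariantSubmodules

theorem mulVecLin_sum_pow_mul {R ι l m : Type*} [CommSemiring R] [Fintype l] [DecidableEq l]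
    [Fintype m] (s : Finset ι) (A : ι → Matrix l l R) (B : Matrix l m R) (k : ℕ) :
    ((∑ i ∈ s, A i) ^ k * B).mulVecLin = ((∑ i ∈ s, (A i).mulVecLin) ^ k) ∘ₗ B.mulVecLin := by
  simp only [mulVecLin_mul, ← toLin'_apply', toLin'_pow, map_sum]

/-- Theorem 4: if the union-graph pair `(L̃* = Σ_g L̃_g, M̃)` is controllable, then the
switched system is controllable: the only subspace containing the columns of `M̃` and
invariant under every `L̃_g` is the whole space. -/
theorem theorem4_union_implies_switched {n d m q t : ℕ}
    (Ltil : Fin t → Matrix (Fin n × Fin d) (Fin n × Fin d) ℝ)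
    (Mtil : Matrix (Fin n × Fin d) (Fin m × Fin q) ℝ)
    (hctrb : (⨆ k ∈ Finset.range (n * d),
        LinearMap.range (((∑ g, Ltil g) ^ k * Mtil).mulVecLin)) = ⊤) :
    ∀ S : Submodule ℝ (Fin n × Fin d → ℝ),
      LinearMap.range Mtil.mulVecLin ≤ S →
      (∀ g, Submodule.map (Ltil g).mulVecLin S ≤ S) →
      S = ⊤ := by
  simp only [mulVecLin_sum_pow_mul] at hctrb
  exact fun S hM hL => theorem4_union_implies_switched_general _ _
    (eq_top_mono (iSup₂_le_iSup _ _) hctrb) S hM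
    fun g => (Module.End.mem_invtSubmodule_iff_map_le _).mpr (hL g)
end
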